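/- Let $K$ be a field, let $n \ge 2$, and let $p(x) = x^n + a_{n-1}x^{n-1} + \cdots + a_1 x + a_0 \in K[x]$ be a monic separable irreducible polynomial of degree $n$. Let $L$ be a splitting field of $p$ over $K$ and let $\alpha_1,\dots,\alpha_n \in L$ be the (distinct) roots of $p$. Let $e_k$ denote the $k$-th elementary symmetric polynomial in $n$ variables. Define polynomials $\hat G_1,\dots,\hat G_n \in L[x_0,\dots,x_{n-1}]$ by $\hat G_k = (-1)^k\, e_k(\beta_1(\bar x),\dots,\beta_n(\bar x))$, where $\beta_i(\bar x) = x_0 + x_1\alpha_i + \cdots + x_{n-1}\alpha_i^{n-1}$. Then: (1) for each $1 \le k \le n$, $\hat G_k$ evaluated at the point $(0,1,0,\dots,0) \in L^n$ equals the image in $L$ of $a_{n-k}$; and (2) the $n\times n$ matrix whose $(k,j)$ entry ($1 \le k \le n$, $0 \le j \le n-1$) is the formal partial derivative $\partial \hat G_k/\partial x_j$ evaluated at $(0,1,0,\dots,0)$ has nonzero determinant. -/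

import Mathlib

open Polynomial

noncomputable section

/-- The linear form `β_i = x₀ + x₁ α_i + ⋯ + x_{n-1} α_i^{n-1}` in `L[x₀, …, x_{n-1}]`. -/
def betaForm {L : Type*} [Field L] {n : ℕ} (α : Fin n → L) (i : Fin n) :
    MvPolynomial (Fin n) L :=
  ∑ j : Fin n, MvPolynomial.C (α i ^ (j : ℕ)) * MvPolynomial.X j

/-- The polynomial `Ĝ_k = (-1)^k e_k(β₁, …, βₙ)` in `L[x₀, …, x_{n-1}]`. -/
def GHat {L : Type*} [Field L] {n : ℕ} (α : Fin n → L) (k : ℕ) :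
    MvPolynomial (Fin n) L :=
  (-1) ^ k * MvPolynomial.aeval (betaForm α) (MvPolynomial.esymm (Fin n) L k)

/-- The matrix whose rows are indexed by `Ĝ₁, …, Ĝₙ` (row `k : Fin n` belongs to `Ĝ_{k+1}`),
whose columns are indexed by `x₀, …, x_{n-1}`, and whose entries are the partial derivatives
`∂Ĝ_{k+1}/∂x_j` evaluated at `b`. -/
def jacobianGHat {L : Type*} [Field L] {n : ℕ} (α : Fin n → L) (b : Fin n → L) :
    Matrix (Fin n) (Fin n) L :=
  Matrix.of fun k j => MvPolynomial.eval b (MvPolynomial.pderiv j (GHat α ((k : ℕ) + 1)))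

end

/-! Viète's map sends `y = (y₁, …, yₙ)` to the non-leading coefficients of
`q(t) = ∏ (t - yᵢ) = ∑ c_k t ^ (n - k)`. The derivative of `q(t)` with respect to `yᵢ` is
`-∏_{l ≠ i} (t - y_l)`, which at `t = y_m` vanishes unless `m = i`. A Vandermonde matrix times the
Jacobian matrix of Viète's map is therefore diagonal. Comparing determinants, where division is
legitimate for indeterminate `y`, gives `(-1)ⁿ V(y)` for the Jacobian determinant, with `V` the
Vandermonde determinant. Since `Ĝ` is Viète's map after the linear map `β`, whose matrix is the
Vandermonde matrix of `α`, the chain rule gives the Jacobian determinant `(-1)ⁿ V(β(b)) V(α)` of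
`Ĝ` at every point `b`; and `β = α` at `(0, 1, 0, …, 0)`. -/

section ChainRule

open MvPolynomial (pderiv)

variable {σ τ R : Type*} [Fintype σ] [CommSemiring R]

theorem derivation_aeval_eq_sum_pderiv {A M : Type*} [CommSemiring A] [Algebra R A]
    [AddCommMonoid M] [Module A M] [Module R M] (D : Derivation R A M) (f : σ → A)
    (P : MvPolynomial σ R) :
    D (MvPolynomial.aeval f P) = ∑ i, MvPolynomial.aeval f (pderiv i P) • D (f i) := by
  classical
  induction P using MvPolynomial.induction_on with
  | C r => simp
  | add P Q hP hQ => simp only [map_add, hP, hQ, add_smul, Finset.sum_add_distrib]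
  | mul_X P l hP =>
    simp only [map_mul, MvPolynomial.aeval_X, Derivation.leibniz, hP, MvPolynomial.pderiv_X,
      map_add, smul_eq_mul, add_smul, Finset.sum_add_distrib, mul_smul, Finset.smul_sum]
    congr 1
    simp [Pi.single_apply, apply_ite (MvPolynomial.aeval f), ite_smul]

theorem eval_pderiv_aeval (f : σ → MvPolynomial τ R) (P : MvPolynomial σ R) (b : τ → R) (j : τ) :
    MvPolynomial.eval b (pderiv j (MvPolynomial.aeval f P)) =
      ∑ i, MvPolynomial.eval (fun l => MvPolynomial.eval b (f l)) (pderiv i P) *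
        MvPolynomial.eval b (pderiv j (f i)) := by
  have eval_aeval (Q : MvPolynomial σ R) : MvPolynomial.eval b (MvPolynomial.aeval f Q) =
      MvPolynomial.eval (fun l => MvPolynomial.eval b (f l)) Q := by
    have eval_comp_algebraMap : (MvPolynomial.eval b).comp (algebraMap R _) = RingHom.id R :=
      RingHom.ext fun _ => MvPolynomial.eval_C _
    rw [MvPolynomial.map_aeval, eval_comp_algebraMap]
    rfl
  simp only [derivation_aeval_eq_sum_pderiv, smul_eq_mul, map_sum, map_mul, eval_aeval]

end ChainRule

section VietaMap

open MvPolynomial (pderiv esymm)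

variable {R : Type*} [CommRing R] {n : ℕ}

/-- The Jacobian matrix at `a` of Viète's map `y ↦ ((-1) ^ k * e_k(y))`, `1 ≤ k ≤ n`, which sends
the roots of a monic polynomial of degree `n` to its non-leading coefficients. Row `k : Fin n`
belongs to `e_{k+1}`, column `i` to the variable `y_i`. -/
noncomputable def vietaJacobian (a : Fin n → R) : Matrix (Fin n) (Fin n) R :=
  Matrix.of fun k i => MvPolynomial.eval a
    (pderiv i ((-1) ^ ((k : ℕ) + 1) * esymm (Fin n) R ((k : ℕ) + 1)))

theorem prod_sub_X_eq_sum_esymm {σ : Type*} [Fintype σ] (t : MvPolynomial σ R) :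
    ∏ i, (t - MvPolynomial.X i) = ∑ k ∈ Finset.range (Fintype.card σ + 1),
      (-1) ^ k * esymm σ R k * t ^ (Fintype.card σ - k) := by
  have h := congrArg (Polynomial.eval t)
    (Multiset.prod_X_sub_X_eq_sum_esymm (Finset.univ.val.map (MvPolynomial.X (R := R) (σ := σ))))
  rw [Multiset.map_map, ← Finset.prod_eq_multiset_prod] at h
  simpa only [Function.comp_apply, Polynomial.eval_prod, Polynomial.eval_finsetSum, eval_mul,
    eval_sub, eval_pow, eval_neg, eval_one, eval_X, eval_C, Multiset.card_map, Finset.card_val,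
    Finset.card_univ, ← MvPolynomial.esymm_eq_multiset_esymm, mul_assoc] using h

theorem eval_pderiv_prod_C_sub_X {σ : Type*} [Fintype σ] [DecidableEq σ] (a : σ → R) (t : R)
    (i : σ) :
    MvPolynomial.eval a (pderiv i (∏ l, (MvPolynomial.C t - MvPolynomial.X l))) =
      -∏ l ∈ {i}ᶜ, (t - a l) := by
  have pderiv_of_ne : pderiv i
      (∏ l ∈ {i}ᶜ, (MvPolynomial.C t - MvPolynomial.X l : MvPolynomial σ R)) = 0 := by
    refine Finset.prod_induction _ (fun q => pderiv i q = 0)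
      (fun q r hq hr => by rw [MvPolynomial.pderiv_mul, hq, hr, zero_mul, mul_zero, add_zero])
      MvPolynomial.pderiv_one fun l hl => ?_
    rw [map_sub, MvPolynomial.pderiv_C, MvPolynomial.pderiv_X_of_ne (by simpa using hl), sub_zero]
  rw [Fintype.prod_eq_mul_prod_compl i, MvPolynomial.pderiv_mul, pderiv_of_ne]
  simp

theorem sum_pow_mul_vietaJacobian (a : Fin n → R) (t : R) (i : Fin n) :
    ∑ k : Fin n, t ^ (k.rev : ℕ) * vietaJacobian a k i = -∏ l ∈ {i}ᶜ, (t - a l) := by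
  have eval_pderiv_mul_C_pow (P : MvPolynomial (Fin n) R) (m : ℕ) :
      MvPolynomial.eval a (pderiv i (P * MvPolynomial.C t ^ m)) =
        t ^ m * MvPolynomial.eval a (pderiv i P) := by
    rw [← map_pow, mul_comm, MvPolynomial.pderiv_C_mul, map_mul, MvPolynomial.eval_C]
  simp only [← eval_pderiv_prod_C_sub_X, prod_sub_X_eq_sum_esymm, Fintype.card_fin,
    Finset.sum_range_succ', Finset.sum_range, map_add, map_sum, eval_pderiv_mul_C_pow, pow_zero,
    MvPolynomial.esymm_zero, mul_one, MvPolynomial.pderiv_one, map_zero, mul_zero, add_zero,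
    Fin.val_rev, vietaJacobian, Matrix.of_apply]

theorem projVandermonde_one_mul_vietaJacobian (a : Fin n → R) :
    Matrix.projVandermonde 1 a * vietaJacobian a =
      Matrix.diagonal fun i => -∏ l ∈ {i}ᶜ, (a i - a l) := by
  ext m i
  simp only [Matrix.mul_apply, Matrix.projVandermonde_apply, Pi.one_apply, one_pow, one_mul,
    sum_pow_mul_vietaJacobian, Matrix.diagonal_apply]
  split_ifs with h
  · rw [h]
  · rw [Finset.prod_eq_zero (i := m) (by simpa using h) (sub_self _), neg_zero]

theorem map_vietaJacobian {S : Type*} [CommRing S] (f : R →+* S) (a : Fin n → R) :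
    (vietaJacobian a).map f = vietaJacobian (f ∘ a) := by
  ext k i
  rw [Matrix.map_apply, vietaJacobian, vietaJacobian, Matrix.of_apply, Matrix.of_apply,
    MvPolynomial.eval₂_comp, MvPolynomial.eval₂_eq_eval_map, ← MvPolynomial.pderiv_map]
  simp only [map_mul, map_pow, map_neg, map_one, MvPolynomial.map_esymm]

theorem det_vietaJacobian_of_injective [IsDomain R] {a : Fin n → R} (ha : Function.Injective a) :
    (vietaJacobian a).det = (-1) ^ n * (Matrix.vandermonde a).det := by
  have det_ne_zero : (Matrix.projVandermonde 1 a).det ≠ 0 := by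
    simp only [Matrix.det_projVandermonde, Pi.one_apply, one_mul]
    exact Finset.prod_ne_zero_iff.2 fun i _ => Finset.prod_ne_zero_iff.2 fun j hj =>
      sub_ne_zero.2 (ha.ne (Finset.mem_Ioi.1 hj).ne)
  refine mul_left_cancel₀ det_ne_zero ?_
  rw [← Matrix.det_mul, projVandermonde_one_mul_vietaJacobian, Matrix.det_diagonal,
    Finset.prod_neg, Finset.card_univ, Fintype.card_fin, mul_left_comm,
    ← Finset.prod_prod_Ioi_mul_eq_prod_prod_off_diag (fun l i => a i - a l),
    Matrix.det_projVandermonde, Matrix.det_vandermonde]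
  simp [Finset.prod_mul_distrib]

theorem det_vietaJacobian (a : Fin n → R) :
    (vietaJacobian a).det = (-1) ^ n * (Matrix.vandermonde a).det := by
  let φ : MvPolynomial (Fin n) ℤ →+* R := (MvPolynomial.aeval a).toRingHom
  have hφ : φ ∘ MvPolynomial.X = a := funext (MvPolynomial.aeval_X a)
  have generic := congrArg φ (det_vietaJacobian_of_injective
    (MvPolynomial.X_injective (σ := Fin n) (R := ℤ)))
  have map_vandermonde :
      φ.mapMatrix (Matrix.vandermonde MvPolynomial.X) = Matrix.vandermonde a := by
    ext i j
    simp [Matrix.vandermonde_apply, ← hφ]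
  rwa [map_mul, RingHom.map_det, RingHom.map_det, map_vandermonde, RingHom.mapMatrix_apply,
    map_vietaJacobian, hφ, map_pow, map_neg, map_one] at generic

end VietaMap

section GHat

open MvPolynomial (pderiv esymm)

variable {L : Type*} [Field L] {n : ℕ} (α : Fin n → L)

theorem eval_betaForm_single (hn : 1 < n) (i : Fin n) :
    MvPolynomial.eval (Pi.single (⟨1, hn⟩ : Fin n) (1 : L)) (betaForm α i) = α i := by
  simp [betaForm, Pi.single_apply]

theorem pderiv_betaForm (i j : Fin n) :
    pderiv j (betaForm α i) = MvPolynomial.C (α i ^ (j : ℕ)) := by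
  simp [betaForm, MvPolynomial.pderiv_X, Pi.single_apply]

theorem eval_GHat (b : Fin n → L) (k : ℕ) :
    MvPolynomial.eval b (GHat α k) =
      (-1) ^ k * (Finset.univ.val.map fun i => MvPolynomial.eval b (betaForm α i)).esymm k := by
  simp only [GHat, MvPolynomial.aeval_esymm_eq_multiset_esymm, Finset.esymm_map_val, map_mul,
    map_pow, map_neg, map_one, map_sum, map_prod]

theorem jacobianGHat_eq_vietaJacobian_mul_vandermonde (b : Fin n → L) :
    jacobianGHat α b =
      vietaJacobian (fun i => MvPolynomial.eval b (betaForm α i)) * Matrix.vandermonde α := by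
  ext k j
  have hG : GHat α (k + 1) = MvPolynomial.aeval (betaForm α)
      ((-1) ^ ((k : ℕ) + 1) * esymm (Fin n) L (k + 1)) := by simp [GHat]
  simp only [jacobianGHat, hG, Matrix.of_apply, eval_pderiv_aeval, pderiv_betaForm,
    MvPolynomial.eval_C, Matrix.mul_apply, vietaJacobian, Matrix.vandermonde_apply]

theorem det_jacobianGHat (b : Fin n → L) :
    (jacobianGHat α b).det =
      (-1) ^ n * (Matrix.vandermonde fun i => MvPolynomial.eval b (betaForm α i)).det *
        (Matrix.vandermonde α).det := by
  rw [jacobianGHat_eq_vietaJacobian_mul_vandermonde, Matrix.det_mul, det_vietaJacobian]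

end GHat

theorem stmt_4_general {K L : Type*} [CommRing K] [Field L] [Algebra K L]
    (n : ℕ) (hn : 2 ≤ n) (p : K[X]) (hp_monic : p.Monic) (hp_deg : p.natDegree = n)
    (α : Fin n → L) (hα : Function.Injective α) (hα_roots : ∀ i, aeval (α i) p = 0) :
    (∀ k : ℕ, k ≤ n →
      MvPolynomial.eval (Pi.single (⟨1, hn⟩ : Fin n) (1 : L)) (GHat α k) =
        algebraMap K L (p.coeff (n - k))) ∧
    (jacobianGHat α (Pi.single (⟨1, hn⟩ : Fin n) (1 : L))).det ≠ 0 := by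
  have hmonic : (p.map (algebraMap K L)).Monic := hp_monic.map _
  have hdeg : (p.map (algebraMap K L)).natDegree = n := by rw [hp_monic.natDegree_map, hp_deg]
  have hroots : (p.map (algebraMap K L)).roots = Finset.univ.val.map α :=
    roots_eq_of_natDegree_le_card_of_ne_zero (S := Finset.univ.map ⟨α, hα⟩)
      (by simp [eval_map_algebraMap, hα_roots]) (by simp [hdeg]) hmonic.ne_zero
  refine ⟨fun k hk => ?_, ?_⟩
  · rw [← coeff_map, coeff_eq_esymm_roots_of_card (by simp [hroots, hdeg]) (by omega),
      hmonic.leadingCoeff, one_mul, hdeg, Nat.sub_sub_self hk, hroots, eval_GHat]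
    simp only [eval_betaForm_single]
  · have hV : (Matrix.vandermonde α).det ≠ 0 := Matrix.det_vandermonde_ne_zero_iff.2 hα
    rw [det_jacobianGHat]
    simpa only [eval_betaForm_single] using
      mul_ne_zero (mul_ne_zero (pow_ne_zero n (neg_ne_zero.2 one_ne_zero)) hV) hV

/-- `α` enumerates the distinct roots of `p` in its splitting field `L`; the point
`(0, 1, 0, …, 0)`, which has a coordinate of index `1` because `2 ≤ n`, is
`Pi.single ⟨1, hn⟩ 1`. -/
theorem stmt_4 {K L : Type*} [Field K] [Field L] [Algebra K L]
    (n : ℕ) (hn : 2 ≤ n) (p : K[X]) (hp_monic : p.Monic) (hp_sep : p.Separable)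
    (hp_irr : Irreducible p) (hp_deg : p.natDegree = n) [IsSplittingField K L p]
    (α : Fin n → L) (hα : Function.Injective α) (hα_roots : Set.range α = p.rootSet L) :
    (∀ k : ℕ, 1 ≤ k → k ≤ n →
      MvPolynomial.eval (Pi.single (⟨1, hn⟩ : Fin n) (1 : L)) (GHat α k) =
        algebraMap K L (p.coeff (n - k))) ∧
    (jacobianGHat α (Pi.single (⟨1, hn⟩ : Fin n) (1 : L))).det ≠ 0 := by
  exact (stmt_4_general n hn p hp_monic hp_deg α hα fun i => aeval_eq_zero_of_mem_rootSet
    (hα_roots ▸ Set.mem_range_self i)).imp_left fun hcoeff k _ => hcoeff k
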